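/- For j = 1, 2, 3, let π_j ∈ ℚ[t] be an irreducible polynomial with π_j(0) ≠ 0, let m_j ≥ 1, set δ_j = π_j^{m_j} and A_j = ℚ[t^{±1}]/(δ_j). Then the quotient vector space (A₁ ⊗_ℚ A₂ ⊗_ℚ A₃)/H is nonzero if and only if there exist complex roots z₁, z₂, z₃ of δ₁, δ₂, δ₃ respectively such that z₁z₂z₃ = 1. -/

import Mathlib

open LaurentPolynomial TensorProduct

set_option synthInstance.maxHeartbeats 1000000
set_option maxHeartbeats 1000000
set_option maxSynthPendingDepth 3
noncomputable section

abbrev LQuot (K : Type) [Field K] (p : LaurentPolynomial K) : Type :=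
  LaurentPolynomial K ⧸ Ideal.span {p}

abbrev Trip (K : Type) [Field K] (p q r : LaurentPolynomial K) : Type :=
  (LQuot K p ⊗[K] LQuot K q) ⊗[K] LQuot K r

def holSub (K : Type) [Field K] (p q r : LaurentPolynomial K) :
    Submodule K (Trip K p q r) :=
  Submodule.span K { x | ∃ (a : LQuot K p) (b : LQuot K q) (c : LQuot K r),
    x = (a ⊗ₜ[K] b) ⊗ₜ[K] c -
      (((T 1 : LaurentPolynomial K) • a) ⊗ₜ[K] ((T 1 : LaurentPolynomial K) • b)) ⊗ₜ[K]
        ((T 1 : LaurentPolynomial K) • c) }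

/-! Put `τ = t ⊗ t ⊗ t` in the `K`-algebra `A = A₁ ⊗ A₂ ⊗ A₃`. The holonomy subspace is the ideal
`(1 - τ)`, so it is proper if and only if `1 - τ` has a zero on `Spec A`. By the Nullstellensatz
such a zero may be taken with values in any algebraically closed extension `L` of `K`. Finally, an
`L`-point of `A` is a triple of `L`-points of the `Aⱼ`, that is, a triple of nonzero roots
`z₁, z₂, z₃` of the defining polynomials, and `τ` takes the value `z₁ * z₂ * z₃` there.
-/

open scoped Pointwise

section Nullstellensatz

variable {K A L : Type*} [Field K] [CommRing A] [Algebra K A] [Algebra.FiniteType K A]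
  [Field L] [Algebra K L] [IsAlgClosed L]

variable (K A L) in
theorem nonempty_algHom_of_finiteType [Nontrivial A] : Nonempty (A →ₐ[K] L) := by
  obtain ⟨M, hM⟩ := Ideal.exists_maximal A
  let _ : Field (A ⧸ M) := Ideal.Quotient.field M
  have : Module.Finite K (A ⧸ M) := finite_of_finite_type_of_isJacobsonRing K (A ⧸ M)
  exact ⟨(IsAlgClosed.lift : A ⧸ M →ₐ[K] L).comp (Ideal.Quotient.mkₐ K M)⟩

variable (K L) in
theorem ideal_ne_top_iff_exists_algHom (I : Ideal A) :
    I ≠ ⊤ ↔ ∃ φ : A →ₐ[K] L, I ≤ RingHom.ker φ := by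
  constructor
  · intro hI
    have : Nontrivial (A ⧸ I) := Ideal.Quotient.nontrivial_iff.mpr hI
    obtain ⟨φ⟩ := nonempty_algHom_of_finiteType K (A ⧸ I) L
    refine ⟨φ.comp (Ideal.Quotient.mkₐ K I), fun x hx => ?_⟩
    simp [RingHom.mem_ker, Ideal.Quotient.eq_zero_iff_mem.mpr hx]
  · rintro ⟨φ, hφ⟩ rfl
    exact RingHom.ker_ne_top φ (top_le_iff.mp hφ)

variable (K L) in
theorem span_one_sub_ne_top_iff (τ : A) :
    Ideal.span {1 - τ} ≠ ⊤ ↔ (1 : L) ∈ Set.range fun φ : A →ₐ[K] L => φ τ := by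
  simp only [ideal_ne_top_iff_exists_algHom K L, Ideal.span_singleton_le_iff_mem,
    RingHom.mem_ker, map_sub, map_one, sub_eq_zero, Set.mem_range, eq_comm (a := (1 : L))]

end Nullstellensatz

section TensorProduct

variable {K A B C S : Type*} [CommRing K] [CommRing A] [Algebra K A] [CommRing B] [Algebra K B]
  [CommRing C] [Algebra K C] [CommRing S] [Algebra K S]

instance finiteType_tensorProduct [Algebra.FiniteType K A] [Algebra.FiniteType K B] :
    Algebra.FiniteType K (A ⊗[K] B) :=
  Algebra.FiniteType.trans (S := A) inferInstance inferInstance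

theorem range_algHom_tmul (a : A) (b : B) :
    (Set.range fun φ : A ⊗[K] B →ₐ[K] S => φ (a ⊗ₜ b)) =
      (Set.range fun f : A →ₐ[K] S => f a) * Set.range fun g : B →ₐ[K] S => g b := by
  ext s
  constructor
  · rintro ⟨φ, rfl⟩
    refine ⟨_, ⟨φ.comp Algebra.TensorProduct.includeLeft, rfl⟩,
      _, ⟨φ.comp Algebra.TensorProduct.includeRight, rfl⟩, ?_⟩
    simp [← map_mul]
  · rintro ⟨_, ⟨f, rfl⟩, _, ⟨g, rfl⟩, rfl⟩
    exact ⟨Algebra.TensorProduct.lift f g fun _ _ => Commute.all _ _, by simp⟩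

theorem span_tmul_sub_mul_tmul_eq_span_one_sub (a : A) (b : B) (c : C) :
    Submodule.span K {x : (A ⊗[K] B) ⊗[K] C | ∃ u v w,
      x = (u ⊗ₜ v) ⊗ₜ w - ((a * u) ⊗ₜ (b * v)) ⊗ₜ (c * w)} =
      (Ideal.span {1 - (a ⊗ₜ[K] b) ⊗ₜ[K] c}).restrictScalars K := by
  set τ := (a ⊗ₜ[K] b) ⊗ₜ[K] c with hτ
  have one_sub_mul_tmul (u : A) (v : B) (w : C) : (1 - τ) * ((u ⊗ₜ v) ⊗ₜ w) =
      (u ⊗ₜ v) ⊗ₜ w - ((a * u) ⊗ₜ (b * v)) ⊗ₜ (c * w) := by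
    simp [hτ, sub_mul]
  apply le_antisymm
  · rw [Submodule.span_le]
    rintro _ ⟨u, v, w, rfl⟩
    rw [← one_sub_mul_tmul]
    exact Ideal.mul_mem_right _ _ (Ideal.mem_span_singleton_self _)
  · set H := Submodule.span K {x : (A ⊗[K] B) ⊗[K] C | ∃ u v w,
      x = (u ⊗ₜ v) ⊗ₜ w - ((a * u) ⊗ₜ (b * v)) ⊗ₜ (c * w)}
    have mkQ_comp_mul : H.mkQ ∘ₗ LinearMap.mulLeft K (1 - τ) = 0 := by
      refine TensorProduct.ext_threefold fun u v w => ?_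
      have : (1 - τ) * ((u ⊗ₜ v) ⊗ₜ w) ∈ H :=
        Submodule.subset_span ⟨u, v, w, one_sub_mul_tmul u v w⟩
      simpa using this
    intro x hx
    obtain ⟨y, rfl⟩ := Ideal.mem_span_singleton.mp hx
    simpa using LinearMap.congr_fun mkQ_comp_mul y

end TensorProduct

section LaurentQuotient

open Polynomial

variable {K : Type} [Field K] {L : Type*} [Field L] [Algebra K L]

/-- The class of `t` in `K[t^{±1}]/(p)`; its image determines a `K`-algebra homomorphism out of this
ring. -/
def LQuot.t (p : K[T;T⁻¹]) : LQuot K p :=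
  Ideal.Quotient.mk _ (T 1)

theorem LQuot.T_one_smul {p : K[T;T⁻¹]} (x : LQuot K p) :
    (T 1 : K[T;T⁻¹]) • x = LQuot.t p * x :=
  Algebra.smul_def _ _

theorem holSub_eq_span_one_sub (p q r : K[T;T⁻¹]) :
    holSub K p q r =
      (Ideal.span {1 - (LQuot.t p ⊗ₜ[K] LQuot.t q) ⊗ₜ[K] LQuot.t r}).restrictScalars K := by
  simp only [holSub, LQuot.T_one_smul]
  exact span_tmul_sub_mul_tmul_eq_span_one_sub _ _ _

theorem LQuot.aeval_t (p : K[X]) : aeval (LQuot.t (toLaurent p)) p = 0 := by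
  have aeval_t_eq_mk (q : K[X]) : aeval (LQuot.t (toLaurent p)) q =
      Ideal.Quotient.mkₐ K _ (toLaurentAlg q) := by
    rw [← AlgHom.comp_apply]
    congr 1
    ext
    simp [LQuot.t]
  rw [aeval_t_eq_mk]
  exact Ideal.Quotient.eq_zero_iff_mem.mpr (Ideal.mem_span_singleton_self _)

theorem LQuot.isUnit_t (p : K[T;T⁻¹]) : IsUnit (LQuot.t p) :=
  (isUnit_T 1).map _

theorem LQuot.exists_algHom_t_eq {p : K[X]} {z : L} (hz : z ≠ 0) (hp : aeval z p = 0) :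
    ∃ f : LQuot K (toLaurent p) →ₐ[K] L, f (LQuot.t _) = z := by
  let ev : K[T;T⁻¹] →ₐ[K] L :=
    { LaurentPolynomial.eval₂ (algebraMap K L) (Units.mk0 z hz) with
      commutes' := LaurentPolynomial.eval₂_C _ _ }
  have ev_toLaurent : ev (toLaurent p) = 0 := by
    rw [← hp]
    exact LaurentPolynomial.eval₂_toLaurent _ _ _
  have ev_T : ev (T 1) = z :=
    (LaurentPolynomial.eval₂_T _ _ 1).trans (by simp)
  have span_le_ker : Ideal.span {toLaurent p} ≤ RingHom.ker ev := by
    rwa [Ideal.span_singleton_le_iff_mem]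
  exact ⟨Ideal.Quotient.liftₐ _ ev span_le_ker, ev_T⟩

variable (L) in
theorem LQuot.range_algHom_t (p : K[X]) :
    (Set.range fun f : LQuot K (toLaurent p) →ₐ[K] L => f (LQuot.t _)) =
      {z | z ≠ 0 ∧ aeval z p = 0} := by
  ext z
  constructor
  · rintro ⟨f, rfl⟩
    refine ⟨((LQuot.isUnit_t _).map f).ne_zero, ?_⟩
    rw [aeval_algHom_apply, LQuot.aeval_t, map_zero]
  · rintro ⟨hz, hp⟩
    exact LQuot.exists_algHom_t_eq hz hp

variable [IsAlgClosed L]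

variable (L) in
theorem nontrivial_quotient_holSub_iff (p q r : K[T;T⁻¹]) :
    Nontrivial (Trip K p q r ⧸ holSub K p q r) ↔
      (1 : L) ∈ (Set.range fun f : LQuot K p →ₐ[K] L => f (LQuot.t p)) *
        (Set.range fun f : LQuot K q →ₐ[K] L => f (LQuot.t q)) *
        (Set.range fun f : LQuot K r →ₐ[K] L => f (LQuot.t r)) := by
  rw [Submodule.Quotient.nontrivial_iff, holSub_eq_span_one_sub, Ne,
    Submodule.restrictScalars_eq_top_iff, ← Ne, span_one_sub_ne_top_iff K L,
    range_algHom_tmul, range_algHom_tmul]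

theorem stmt1_general (p q r : K[X]) :
    Nontrivial (Trip K (toLaurent p) (toLaurent q) (toLaurent r) ⧸
        holSub K (toLaurent p) (toLaurent q) (toLaurent r)) ↔
      ∃ z₁ z₂ z₃ : L, aeval z₁ p = 0 ∧ aeval z₂ q = 0 ∧ aeval z₃ r = 0 ∧ z₁ * z₂ * z₃ = 1 := by
  simp only [nontrivial_quotient_holSub_iff L, LQuot.range_algHom_t, Set.mem_mul,
    Set.mem_ofPred_eq]
  constructor
  · rintro ⟨_, ⟨z₁, ⟨-, hp⟩, z₂, ⟨-, hq⟩, rfl⟩, z₃, ⟨-, hr⟩, hprod⟩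
    exact ⟨z₁, z₂, z₃, hp, hq, hr, hprod⟩
  · rintro ⟨z₁, z₂, z₃, hp, hq, hr, hprod⟩
    have hz₁₂ : z₁ * z₂ ≠ 0 := left_ne_zero_of_mul_eq_one hprod
    have hz₃ : z₃ ≠ 0 := right_ne_zero_of_mul_eq_one hprod
    exact ⟨_, ⟨z₁, ⟨left_ne_zero_of_mul hz₁₂, hp⟩, z₂, ⟨right_ne_zero_of_mul hz₁₂, hq⟩, rfl⟩,
      z₃, ⟨hz₃, hr⟩, hprod⟩

end LaurentQuotient

theorem stmt1 (π₁ π₂ π₃ : Polynomial ℚ)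
    (hirr₁ : Irreducible π₁) (hirr₂ : Irreducible π₂) (hirr₃ : Irreducible π₃)
    (h0₁ : π₁.eval 0 ≠ 0) (h0₂ : π₂.eval 0 ≠ 0) (h0₃ : π₃.eval 0 ≠ 0)
    (m₁ m₂ m₃ : ℕ) (hm₁ : 1 ≤ m₁) (hm₂ : 1 ≤ m₂) (hm₃ : 1 ≤ m₃) :
    Nontrivial (Trip ℚ (Polynomial.toLaurent (π₁ ^ m₁)) (Polynomial.toLaurent (π₂ ^ m₂))
          (Polynomial.toLaurent (π₃ ^ m₃)) ⧸
        holSub ℚ (Polynomial.toLaurent (π₁ ^ m₁)) (Polynomial.toLaurent (π₂ ^ m₂))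
          (Polynomial.toLaurent (π₃ ^ m₃))) ↔
      ∃ z₁ z₂ z₃ : ℂ, Polynomial.aeval z₁ (π₁ ^ m₁) = 0 ∧ Polynomial.aeval z₂ (π₂ ^ m₂) = 0 ∧
        Polynomial.aeval z₃ (π₃ ^ m₃) = 0 ∧ z₁ * z₂ * z₃ = 1 := by
  exact stmt1_general _ _ _
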